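/- arXiv:2309.10124 — 2 statements merged into one kernel-verified Lean document; each statement's English description precedes it below -/
import Mathlib

section
/- Let H be a real Hilbert space, f : H → ℝ ∪ {+∞} a proper convex lower semicontinuous function, S : H → H a continuous linear bijection with continuous inverse, S* its adjoint, and M := S S* (so M is positive definite and invertible). Define Prox_{fS}(v) as the unique minimizer of z ↦ f(S z) + (1/2)‖z − v‖², and Prox_{Mf}(v) as the unique minimizer of z ↦ f(z) + (1/2)⟨z − v, M⁻¹(z − v)⟩. Then for every v ∈ H: Prox_{fS}(v) = S⁻¹ Prox_{Mf}(S v) and Prox_{Mf}(v) = S Prox_{fS}(S⁻¹ v). -/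
open scoped RealInnerProductSpace

/-!
As `⟪S w, (S S*)⁻¹ (S w)⟫ = ‖w‖ ^ 2`, the substitution of `S z` for `z` turns the objective of
`Prox_{Mf}(v)` into that of `Prox_{fS}(S⁻¹ v)`, so `S⁻¹` maps a minimizer of the former to a
minimizer of the latter. A strictly convex penalty leaves room for one minimizer only.
-/

/-- Midpoint convexity of an extended-real-valued function: the inequality of convexity at
`t = 1 / 2` only. Mathlib's `ConvexOn` does not apply, since `EReal` carries no action of `ℝ`. -/
def MidpointConvex {E : Type*} [AddCommGroup E] [Module ℝ E] (f : E → EReal) : Prop :=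
  ∀ x y, f (midpoint ℝ x y) ≤ ((1 / 2 : ℝ) : EReal) * f x + ((1 / 2 : ℝ) : EReal) * f y

/-- `IsProx q f v p` says that `p` is a proximal point of `f` at `v`, that is a minimizer of
`z ↦ f z + q (z - v) / 2`. The penalty `q` is an arbitrary function, so that `‖·‖ ^ 2` and the
squared `M⁻¹`-norm are treated alike. -/
def IsProx {E : Type*} [AddGroup E] (q : E → ℝ) (f : E → EReal) (v p : E) : Prop :=
  ∀ z, f p + ((1 / 2 * q (p - v) : ℝ) : EReal) ≤ f z + ((1 / 2 * q (z - v) : ℝ) : EReal)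

theorem MidpointConvex.of_convex {E : Type*} [AddCommGroup E] [Module ℝ E] {f : E → EReal}
    (hf : ∀ x y : E, ∀ t : ℝ, 0 ≤ t → t ≤ 1 →
      f (t • x + (1 - t) • y) ≤ (t : EReal) * f x + ((1 - t : ℝ) : EReal) * f y) :
    MidpointConvex f := fun x y => by
  have h := hf x y (1 / 2) one_half_pos.le one_half_lt_one.le
  rwa [sub_half, ← smul_add, one_div, ← invOf_eq_inv, ← midpoint_eq_smul_add, invOf_eq_inv,
    ← one_div] at h

theorem MidpointConvex.comp_linearMap {E F : Type*} [AddCommGroup E] [Module ℝ E]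
    [AddCommGroup F] [Module ℝ F] {f : F → EReal} (hf : MidpointConvex f) (S : E →ₗ[ℝ] F) :
    MidpointConvex (f ∘ S) := fun x y => by
  simpa only [Function.comp_apply, midpoint_eq_smul_add, map_smul, map_add] using hf (S x) (S y)

theorem strictConvexOn_univ_norm_sq {E : Type*} [NormedAddCommGroup E] [InnerProductSpace ℝ E] :
    StrictConvexOn ℝ Set.univ fun z : E => ‖z‖ ^ 2 := by
  have strong : StrongConvexOn Set.univ 2 fun z : E => ‖z‖ ^ 2 :=
    strongConvexOn_iff_convex.2 (by simpa using convexOn_const (0 : ℝ) convex_univ)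
  exact strong.strictConvexOn two_pos

namespace IsProx

theorem ne_top {E : Type*} [AddGroup E] {q : E → ℝ} {f : E → EReal} {v p : E}
    (hp : IsProx q f v p) (hproper : ∃ x, f x ≠ ⊤) : f p ≠ ⊤ := by
  obtain ⟨x, hx⟩ := hproper
  intro htop
  have h := hp x
  rw [htop, EReal.top_add_coe, top_le_iff] at h
  exact EReal.add_ne_top hx (EReal.coe_ne_top _) h

theorem unique {E : Type*} [AddCommGroup E] [Module ℝ E] {q : E → ℝ} {f : E → EReal} {v p p' : E}
    (hq : StrictConvexOn ℝ Set.univ q) (hf : MidpointConvex f) (hproper : ∃ x, f x ≠ ⊤)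
    (hnobot : ∀ x, f x ≠ ⊥) (hp : IsProx q f v p) (hp' : IsProx q f v p') : p = p' := by
  by_contra hne
  have hq_mid : q (midpoint ℝ p p' - v) < 1 / 2 * q (p - v) + 1 / 2 * q (p' - v) := by
    have hmid : midpoint ℝ p p' - v = (1 / 2 : ℝ) • (p - v) + (1 / 2 : ℝ) • (p' - v) := by
      rw [midpoint_eq_smul_add, invOf_eq_inv]
      module
    rw [hmid]
    exact hq.2 trivial trivial (sub_left_injective.ne hne) one_half_pos one_half_pos (add_halves 1)
  have hf_mid := hf p p'
  have hp_mid := hp (midpoint ℝ p p')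
  have hp'_mid := hp' (midpoint ℝ p p')
  lift f p to ℝ using ⟨hp.ne_top hproper, hnobot p⟩ with α
  lift f p' to ℝ using ⟨hp'.ne_top hproper, hnobot p'⟩ with β
  have hmid_ne_top : f (midpoint ℝ p p') ≠ ⊤ :=
    ne_top_of_le_ne_top (EReal.coe_ne_top (1 / 2 * α + 1 / 2 * β)) (mod_cast hf_mid)
  lift f (midpoint ℝ p p') to ℝ using ⟨hmid_ne_top, hnobot _⟩ with γ
  norm_cast at hf_mid hp_mid hp'_mid
  linarith

theorem comp_addEquiv {E F : Type*} [AddGroup E] [AddGroup F] {q : F → ℝ} {f : F → EReal}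
    {v p : F} (hp : IsProx q f v p) (S : E ≃+ F) :
    IsProx (q ∘ S) (f ∘ S) (S.symm v) (S.symm p) := fun z => by
  simpa only [Function.comp_apply, map_sub, AddEquiv.apply_symm_apply] using hp (S z)

end IsProx

theorem inner_map_rightInverse_comp_adjoint {𝕜 E F : Type*} [RCLike 𝕜]
    [NormedAddCommGroup E] [InnerProductSpace 𝕜 E] [CompleteSpace E]
    [NormedAddCommGroup F] [InnerProductSpace 𝕜 F] [CompleteSpace F]
    {S : E →L[𝕜] F} (hS : Function.Injective S) {N : F → F}
    (hN : Function.RightInverse N (S ∘L S.adjoint)) (w : E) :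
    inner 𝕜 (S w) (N (S w)) = (‖w‖ : 𝕜) ^ 2 := by
  have adjoint_apply : S.adjoint (N (S w)) = w := hS (hN (S w))
  rw [← S.adjoint_inner_right, adjoint_apply, inner_self_eq_norm_sq_to_K]

theorem stmt_4_general {H K : Type*}
    [NormedAddCommGroup H] [InnerProductSpace ℝ H] [CompleteSpace H]
    [NormedAddCommGroup K] [InnerProductSpace ℝ K] [CompleteSpace K]
    {f : K → EReal} (hf : MidpointConvex f) (hproper : ∃ x, f x ≠ ⊤) (hnobot : ∀ x, f x ≠ ⊥)
    (S : H ≃L[ℝ] K) {Minv : K → K}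
    (hMinv : Function.RightInverse Minv ((S : H →L[ℝ] K) ∘L (S : H →L[ℝ] K).adjoint))
    {P : H → H} {Q : K → K} (hP : ∀ v, IsProx (fun z => ‖z‖ ^ 2) (f ∘ S) v (P v))
    (hQ : ∀ v, IsProx (fun z => ⟪z, Minv z⟫) f v (Q v)) :
    (∀ v, P v = S.symm (Q (S v))) ∧ ∀ v, Q v = S (P (S.symm v)) := by
  have norm_eq : (fun z => ⟪z, Minv z⟫) ∘ S = fun z : H => ‖z‖ ^ 2 :=
    funext (inner_map_rightInverse_comp_adjoint S.injective hMinv)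
  have hproper_comp : ∃ x, (f ∘ S) x ≠ ⊤ := S.surjective.exists.1 hproper
  have hQ_comp (v : K) : IsProx (fun z => ‖z‖ ^ 2) (f ∘ S) (S.symm v) (S.symm (Q v)) :=
    norm_eq ▸ (hQ v).comp_addEquiv S.toLinearEquiv.toAddEquiv
  have eq_symm (v : K) : P (S.symm v) = S.symm (Q v) :=
    (hP _).unique strictConvexOn_univ_norm_sq (hf.comp_linearMap S.toLinearMap) hproper_comp
      (fun x => hnobot (S x)) (hQ_comp v)
  exact ⟨fun v => by rw [← eq_symm, S.symm_apply_apply],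
    fun v => by rw [eq_symm, S.apply_symm_apply]⟩

/-- operator-parameter translation rule. With `S : H ≃L[ℝ] H`, `S*` its adjoint,
`M = S S*` (invertible with inverse `Minv`), `P v` the (unique) minimizer of
`z ↦ f(S z) + (1/2)‖z − v‖²` (i.e. `Prox_{fS}`), and `Q v` the (unique) minimizer of
`z ↦ f(z) + (1/2)⟨z − v, M⁻¹(z − v)⟩` (i.e. `Prox_{Mf}`), for every `v` we have
`Prox_{fS}(v) = S⁻¹ Prox_{Mf}(S v)` and `Prox_{Mf}(v) = S Prox_{fS}(S⁻¹ v)`. -/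
theorem stmt_4 {H : Type*} [NormedAddCommGroup H] [InnerProductSpace ℝ H] [CompleteSpace H]
    (f : H → EReal)
    (hconv : ∀ x y : H, ∀ t : ℝ, 0 ≤ t → t ≤ 1 →
      f (t • x + (1 - t) • y) ≤ ((t : ℝ) : EReal) * f x + (((1 - t : ℝ)) : EReal) * f y)
    (hlsc : LowerSemicontinuous f)
    (hproper : ∃ x, f x ≠ ⊤) (hnobot : ∀ x, f x ≠ ⊥)
    (S : H ≃L[ℝ] H) (M Minv : H →L[ℝ] H)
    (hM : M = (S : H →L[ℝ] H) ∘L ContinuousLinearMap.adjoint (S : H →L[ℝ] H))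
    (hMinv : ∀ w : H, M (Minv w) = w ∧ Minv (M w) = w)
    (P Q : H → H)
    (hP : ∀ v z : H, f (S (P v)) + (((1 : ℝ) / 2 * ‖P v - v‖ ^ 2 : ℝ) : EReal) ≤
        f (S z) + (((1 : ℝ) / 2 * ‖z - v‖ ^ 2 : ℝ) : EReal))
    (hQ : ∀ v z : H,
        f (Q v) + (((1 : ℝ) / 2 * ⟪Q v - v, Minv (Q v - v)⟫ : ℝ) : EReal) ≤
        f z + (((1 : ℝ) / 2 * ⟪z - v, Minv (z - v)⟫ : ℝ) : EReal)) :
    ∀ v : H, P v = S.symm (Q (S v)) ∧ Q v = S (P (S.symm v)) := by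
  have hMinv_right : Function.RightInverse Minv (S ∘L (S : H →L[ℝ] H).adjoint) :=
    fun w => hM ▸ (hMinv w).1
  exact forall_and.2
    (stmt_4_general (.of_convex hconv) hproper hnobot S hMinv_right hP hQ)
end

section
/- Let T : ℝⁿ → ℝⁿ be θ-averaged with θ ∈ (0,1), i.e. T = (1−θ)I + θN for some nonexpansive N, and assume Fix T := {ζ : T(ζ) = ζ} is nonempty. For any starting point ζ⁰, define ζ^{k+1} = T(ζ^k). Then for every k ≥ 0 and every fixed point ζ⋆ ∈ Fix T: ‖ζ^{k+1} − ζ^k‖² ≤ (θ / ((k+1)(1−θ))) · ‖ζ⁰ − ζ⋆‖²; in particular ‖ζ^{k+1} − ζ^k‖² ≤ (θ / ((k+1)(1−θ))) · dist²(ζ⁰, Fix T). -/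
open Metric

/-!
Squared norms are quadratic along segments, so averaging with weight `θ` leaves a surplus: a step
of a `θ`-averaged map `T` lowers `θ‖· - s‖²`, for a fixed point `s`, by at least `1 - θ` times the
squared length of the step. Summing telescopes, and since `T` is nonexpansive the steps shrink, so
the last of the first `k + 1` steps is at most their average. The bound in terms of the distance to
`Fix T` follows because that distance is a limit of distances to fixed points; it need not be
attained in a general inner product space.
-/

open Finset Function

theorem infDist_mem_closure_image_dist {α : Type*} [PseudoMetricSpace α] {S : Set α}
    (hS : S.Nonempty) (x : α) : infDist x S ∈ closure ((dist x ·) '' S) :=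
  (isGLB_infDist hS).mem_closure (hS.image _)

theorem le_mul_infDist_sq {α : Type*} [PseudoMetricSpace α] {S : Set α} (hS : S.Nonempty) {x : α}
    {a c : ℝ} (h : ∀ s ∈ S, a ≤ c * dist x s ^ 2) : a ≤ c * infDist x S ^ 2 := by
  have hclosed : IsClosed {t : ℝ | a ≤ c * t ^ 2} :=
    isClosed_le continuous_const (by fun_prop)
  have hsub : (dist x ·) '' S ⊆ {t : ℝ | a ≤ c * t ^ 2} := Set.image_subset_iff.2 h
  exact closure_minimal hsub hclosed (infDist_mem_closure_image_dist hS x)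

theorem antitone_dist_succ_of_lipschitzWith_one {α : Type*} [PseudoMetricSpace α] {T : α → α}
    (hT : LipschitzWith 1 T) {ζ : ℕ → α} (hζ : ∀ k, ζ (k + 1) = T (ζ k)) :
    Antitone fun k ↦ dist (ζ (k + 1)) (ζ k) := by
  refine antitone_nat_of_succ_le fun k ↦ ?_
  simpa only [← hζ, NNReal.coe_one, one_mul] using hT.dist_le_mul (ζ (k + 1)) (ζ k)

theorem succ_nsmul_le_sum_range_succ_of_antitone {M : Type*} [AddCommMonoid M] [PartialOrder M]
    [IsOrderedAddMonoid M] {a : ℕ → M} (ha : Antitone a) (k : ℕ) :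
    (k + 1) • a k ≤ ∑ i ∈ range (k + 1), a i := by
  simpa only [card_range] using card_nsmul_le_sum (range (k + 1)) a (a k)
    fun i hi ↦ ha (mem_range_succ_iff.1 hi)

theorem norm_sq_one_sub_smul_add_smul {E : Type*} [SeminormedAddCommGroup E]
    [InnerProductSpace ℝ E] (t : ℝ) (x y : E) :
    ‖(1 - t) • x + t • y‖ ^ 2 =
      (1 - t) * ‖x‖ ^ 2 + t * ‖y‖ ^ 2 - t * (1 - t) * ‖x - y‖ ^ 2 := by
  simp only [norm_add_sq_real, norm_sub_sq_real, norm_smul, mul_pow, Real.norm_eq_abs, sq_abs,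
    real_inner_smul_left, real_inner_smul_right]
  ring

/-- `T` is `θ`-averaged: `T = (1 - θ)I + θN` for some nonexpansive map `N`. The range of `θ`,
usually `(0, 1)`, is not part of the definition. -/
def IsAveraged {E : Type*} [SeminormedAddCommGroup E] [NormedSpace ℝ E] (θ : ℝ) (T : E → E) :
    Prop :=
  ∃ N : E → E, LipschitzWith 1 N ∧ ∀ x, T x = (1 - θ) • x + θ • N x

namespace IsAveraged

section NormedSpace

variable {E : Type*} [SeminormedAddCommGroup E] [NormedSpace ℝ E] {T : E → E} {θ : ℝ}

theorem lipschitzWith_one (hT : IsAveraged θ T) (hθ0 : 0 ≤ θ) (hθ1 : θ ≤ 1) :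
    LipschitzWith 1 T := by
  obtain ⟨N, hN, hTN⟩ := hT
  refine LipschitzWith.mk_one fun x y ↦ ?_
  calc dist (T x) (T y)
      ≤ dist ((1 - θ) • x) ((1 - θ) • y) + dist (θ • N x) (θ • N y) := by
        simpa only [hTN] using dist_add_add_le _ _ _ _
    _ = (1 - θ) * dist x y + θ * dist (N x) (N y) := by
        rw [dist_smul₀, dist_smul₀, Real.norm_of_nonneg (sub_nonneg.2 hθ1),
          Real.norm_of_nonneg hθ0]
    _ ≤ (1 - θ) * dist x y + θ * dist x y := by
        gcongr
        simpa using hN.dist_le_mul x y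
    _ = dist x y := by ring

end NormedSpace

section InnerProductSpace

variable {E : Type*} [SeminormedAddCommGroup E] [InnerProductSpace ℝ E] {T : E → E} {θ : ℝ}

theorem mul_norm_sub_sq_add_le (hT : IsAveraged θ T) (x y : E) :
    θ * ‖T x - T y‖ ^ 2 + (1 - θ) * ‖(T x - x) - (T y - y)‖ ^ 2 ≤ θ * ‖x - y‖ ^ 2 := by
  obtain ⟨N, hN, hTN⟩ := hT
  have hN_sq : ‖N x - N y‖ ^ 2 ≤ ‖x - y‖ ^ 2 := by
    gcongr
    simpa [dist_eq_norm] using hN.dist_le_mul x y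
  have hT_sub : T x - T y = (1 - θ) • (x - y) + θ • (N x - N y) := by
    rw [hTN, hTN]; module
  have hstep_sub : (T x - x) - (T y - y) = -θ • ((x - y) - (N x - N y)) := by
    rw [hTN, hTN]; module
  calc θ * ‖T x - T y‖ ^ 2 + (1 - θ) * ‖(T x - x) - (T y - y)‖ ^ 2
      = θ * (1 - θ) * ‖x - y‖ ^ 2 + θ ^ 2 * ‖N x - N y‖ ^ 2 := by
        rw [hstep_sub, hT_sub, norm_sq_one_sub_smul_add_smul, norm_smul, mul_pow,
          Real.norm_eq_abs, sq_abs]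
        ring
    _ ≤ θ * (1 - θ) * ‖x - y‖ ^ 2 + θ ^ 2 * ‖x - y‖ ^ 2 := by gcongr
    _ = θ * ‖x - y‖ ^ 2 := by ring

theorem mul_norm_step_sq_le (hT : IsAveraged θ T) {s : E} (hs : IsFixedPt T s) (x : E) :
    (1 - θ) * ‖T x - x‖ ^ 2 ≤ θ * ‖x - s‖ ^ 2 - θ * ‖T x - s‖ ^ 2 := by
  have h := hT.mul_norm_sub_sq_add_le x s
  rw [hs.eq, sub_self, sub_zero] at h
  linarith

theorem mul_sum_norm_step_sq_le (hT : IsAveraged θ T) {s : E} (hs : IsFixedPt T s) {ζ : ℕ → E}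
    (hζ : ∀ k, ζ (k + 1) = T (ζ k)) (k : ℕ) :
    (1 - θ) * ∑ i ∈ range k, ‖ζ (i + 1) - ζ i‖ ^ 2 ≤
      θ * ‖ζ 0 - s‖ ^ 2 - θ * ‖ζ k - s‖ ^ 2 := by
  rw [mul_sum, ← sum_range_sub' fun i ↦ θ * ‖ζ i - s‖ ^ 2]
  refine sum_le_sum fun i _ ↦ ?_
  simpa only [hζ] using hT.mul_norm_step_sq_le hs (ζ i)

theorem norm_step_sq_le (hT : IsAveraged θ T) (hθ0 : 0 ≤ θ) (hθ1 : θ < 1) {s : E}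
    (hs : IsFixedPt T s) {ζ : ℕ → E} (hζ : ∀ k, ζ (k + 1) = T (ζ k)) (k : ℕ) :
    ‖ζ (k + 1) - ζ k‖ ^ 2 ≤ θ / (((k : ℝ) + 1) * (1 - θ)) * ‖ζ 0 - s‖ ^ 2 := by
  have hθ : 0 < 1 - θ := sub_pos.2 hθ1
  have hsteps : Antitone fun i ↦ ‖ζ (i + 1) - ζ i‖ ^ 2 := fun i j hij ↦ by
    have hdist := antitone_dist_succ_of_lipschitzWith_one (hT.lipschitzWith_one hθ0 hθ1.le) hζ hij
    simp only [dist_eq_norm] at hdist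
    exact pow_le_pow_left₀ (norm_nonneg _) hdist 2
  rw [div_mul_eq_mul_div, le_div_iff₀' (mul_pos (by positivity) hθ)]
  calc ((k : ℝ) + 1) * (1 - θ) * ‖ζ (k + 1) - ζ k‖ ^ 2
      = (1 - θ) * (((k : ℝ) + 1) * ‖ζ (k + 1) - ζ k‖ ^ 2) := by ring
    _ ≤ (1 - θ) * ∑ i ∈ range (k + 1), ‖ζ (i + 1) - ζ i‖ ^ 2 := by
        gcongr
        simpa only [nsmul_eq_mul, Nat.cast_succ] using
          succ_nsmul_le_sum_range_succ_of_antitone hsteps k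
    _ ≤ θ * ‖ζ 0 - s‖ ^ 2 - θ * ‖ζ (k + 1) - s‖ ^ 2 := hT.mul_sum_norm_step_sq_le hs hζ (k + 1)
    _ ≤ θ * ‖ζ 0 - s‖ ^ 2 := sub_le_self _ (by positivity)

end InnerProductSpace

end IsAveraged

theorem stmt_12_general {E : Type*} [SeminormedAddCommGroup E] [InnerProductSpace ℝ E]
    {T : E → E} {θ : ℝ} (hT : IsAveraged θ T) (hθ0 : 0 ≤ θ) (hθ1 : θ < 1)
    (hfix : (fixedPoints T).Nonempty) {ζ : ℕ → E} (hζ : ∀ k, ζ (k + 1) = T (ζ k)) (k : ℕ) :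
    (∀ s ∈ fixedPoints T,
      ‖ζ (k + 1) - ζ k‖ ^ 2 ≤ θ / (((k : ℝ) + 1) * (1 - θ)) * ‖ζ 0 - s‖ ^ 2) ∧
    ‖ζ (k + 1) - ζ k‖ ^ 2 ≤
      θ / (((k : ℝ) + 1) * (1 - θ)) * infDist (ζ 0) (fixedPoints T) ^ 2 := by
  have hpoint (s : E) (hs : s ∈ fixedPoints T) := hT.norm_step_sq_le hθ0 hθ1 hs hζ k
  exact ⟨hpoint, le_mul_infDist_sq hfix (by simpa only [dist_eq_norm] using hpoint)⟩

/-- worst-case rate for a `θ`-averaged map `T = (1−θ)I + θN` on `ℝⁿ`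
(with `N` nonexpansive and `Fix T ≠ ∅`): for the iteration `ζ^{k+1} = T(ζ^k)` and every
`k` and every fixed point `ζ⋆`,
`‖ζ^{k+1} − ζ^k‖² ≤ (θ/((k+1)(1−θ)))‖ζ⁰ − ζ⋆‖²`, and in particular
`‖ζ^{k+1} − ζ^k‖² ≤ (θ/((k+1)(1−θ))) dist²(ζ⁰, Fix T)`. -/
theorem stmt_12 {n : ℕ} (T N : EuclideanSpace ℝ (Fin n) → EuclideanSpace ℝ (Fin n))
    (θ : ℝ) (hθ0 : 0 < θ) (hθ1 : θ < 1)
    (hN : ∀ u v, ‖N u - N v‖ ≤ ‖u - v‖)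
    (hT : ∀ x, T x = (1 - θ) • x + θ • N x)
    (hfix : ∃ x, T x = x)
    (ζ : ℕ → EuclideanSpace ℝ (Fin n)) (hζ : ∀ k, ζ (k + 1) = T (ζ k)) :
    ∀ k : ℕ,
      (∀ ζs, T ζs = ζs →
        ‖ζ (k + 1) - ζ k‖ ^ 2 ≤ θ / (((k : ℝ) + 1) * (1 - θ)) * ‖ζ 0 - ζs‖ ^ 2) ∧
      ‖ζ (k + 1) - ζ k‖ ^ 2 ≤
        θ / (((k : ℝ) + 1) * (1 - θ)) * (infDist (ζ 0) {x | T x = x}) ^ 2 := by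
  have hN_lip : LipschitzWith 1 N := .mk_one (by simpa only [dist_eq_norm] using hN)
  exact stmt_12_general ⟨N, hN_lip, hT⟩ hθ0.le hθ1 hfix hζ
end
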